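/- Let Z = X × Y where X, Y are nonempty closed convex sets in Euclidean spaces, let {f_i}_{i=1}^n be differentiable functions on Z that are L-average smooth, and suppose f = (1/n)∑_{i=1}^n f_i is (μ, μ)-convex-concave with 0 < μ ≤ L and has a saddle point z* ∈ Z. Fix z, w ∈ Z, set p = 1/(2n), τ = 1/(4√n·L), z̄ = (1−p)z + p·w and z' = P_Z(z̄ − τ·g(w)), and for each i ∈ {1,…,n} set z_+^{(i)} = P_Z(z̄ − τ·[g(w) + g_i(z') − g_i(w)]). Then (1 + τμ)·(1/n)∑_{i=1}^n ‖z_+^{(i)} − z*‖² ≤ (1−p)‖z − z*‖² + p‖w − z*‖². -/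

import Mathlib

/-- The first-order lower bound for a strongly convex function on a convex set, at a point where
the gradient exists in the ambient space. -/
theorem StrongConvexOn.add_inner_gradient_le {E : Type*} [NormedAddCommGroup E]
    [InnerProductSpace ℝ E] [CompleteSpace E] {s : Set E} {m : ℝ} {f : E → ℝ}
    (hf : StrongConvexOn s m f) {x y : E} (hx : x ∈ s) (hy : y ∈ s)
    (hd : DifferentiableAt ℝ f x) :
    f x + inner ℝ (gradient f x) (y - x) + m / 2 * ‖x - y‖ ^ 2 ≤ f y := by
  have hline : HasDerivAt (fun t : ℝ => f (x + t • (y - x)))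
      (inner ℝ (gradient f x) (y - x)) 0 := by
    have h1 : HasFDerivAt f (InnerProductSpace.toDual ℝ E (gradient f x))
        (x + (0 : ℝ) • (y - x)) := by
      simpa using hd.hasGradientAt.hasFDerivAt
    have h2 : HasDerivAt (fun t : ℝ => x + t • (y - x)) (y - x) 0 := by
      simpa using ((hasDerivAt_id (0 : ℝ)).smul_const (y - x)).const_add x
    exact h1.comp_hasDerivAt (0 : ℝ) h2
  have hslope := hline.tendsto_slope_zero_right
  have hbound : Filter.Tendsto (fun t : ℝ => f y - f x - (1 - t) * (m / 2 * ‖x - y‖ ^ 2))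
      (nhdsWithin 0 (Set.Ioi 0)) (nhds (f y - f x - (1 - 0) * (m / 2 * ‖x - y‖ ^ 2))) :=
    (Continuous.tendsto (by fun_prop) 0).mono_left nhdsWithin_le_nhds
  have hle := le_of_tendsto_of_tendsto hslope hbound (by
    filter_upwards [Ioo_mem_nhdsGT (show (0 : ℝ) < 1 by norm_num)] with t ht
    have h := hf.2 hx hy (sub_nonneg.2 ht.2.le) ht.1.le (by ring)
    have he : (1 - t) • x + t • y = x + t • (y - x) := by module
    rw [he] at h
    simp only [smul_eq_mul, zero_add, zero_smul, add_zero] at h ⊢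
    rw [inv_mul_le_iff₀ ht.1]
    linarith)
  linarith

/-- Quadratic growth of a strongly convex function around a minimizer. -/
theorem StrongConvexOn.add_sq_le_of_isMinOn {E : Type*} [NormedAddCommGroup E]
    [NormedSpace ℝ E] {s : Set E} {m : ℝ} {f : E → ℝ}
    (hf : StrongConvexOn s m f) {x y : E} (hx : x ∈ s) (hy : y ∈ s) (hmin : IsMinOn f s x) :
    f x + m / 2 * ‖x - y‖ ^ 2 ≤ f y := by
  have hbound : Filter.Tendsto (fun t : ℝ => f y - f x - (1 - t) * (m / 2 * ‖x - y‖ ^ 2))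
      (nhdsWithin 0 (Set.Ioi 0)) (nhds (f y - f x - (1 - 0) * (m / 2 * ‖x - y‖ ^ 2))) :=
    (Continuous.tendsto (by fun_prop) 0).mono_left nhdsWithin_le_nhds
  have hle := ge_of_tendsto hbound (b := 0) (by
    filter_upwards [Ioo_mem_nhdsGT (show (0 : ℝ) < 1 by norm_num)] with t ht
    have h := hf.2 hx hy (sub_nonneg.2 ht.2.le) ht.1.le (by ring)
    have hm := hmin (hf.1 hx hy (sub_nonneg.2 ht.2.le) ht.1.le (by ring))
    simp only [smul_eq_mul, Set.mem_ofPred_eq] at h hm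
    refine nonneg_of_mul_nonneg_right (a := t) ?_ ht.1
    linarith)
  linarith

/-- The variational inequality for a nearest point of a convex set. -/
theorem inner_sub_nonneg_of_forall_norm_sub_le {E : Type*} [NormedAddCommGroup E]
    [InnerProductSpace ℝ E] {s : Set E} (hs : Convex ℝ s) {u q v : E} (hq : q ∈ s)
    (hmin : ∀ v ∈ s, ‖u - q‖ ≤ ‖u - v‖) (hv : v ∈ s) : 0 ≤ inner ℝ (q - u) (v - q) := by
  have : Nonempty s := ⟨⟨q, hq⟩⟩
  have heq : ‖u - q‖ = ⨅ v : s, ‖u - v‖ :=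
    le_antisymm (le_ciInf fun v => hmin v v.2)
      (ciInf_le ⟨0, by rintro _ ⟨v, rfl⟩; exact norm_nonneg _⟩ (⟨q, hq⟩ : s))
  have h := (norm_eq_iInf_iff_real_inner_le_zero hs hq).1 heq v hv
  rw [← neg_sub u q, inner_neg_left]
  linarith

/-- The deterministic extragradient estimate with anchor `(1 - p) • z + p • w`, base direction `G`
and corrected direction `G + D`. -/
theorem anchored_extragradient_step {E : Type*} [NormedAddCommGroup E]
    [InnerProductSpace ℝ E] {z w zs zh zi G D : E} {p τ μ : ℝ} (hp : p ≤ 1)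
    (h0 : 0 ≤ τ * μ) (h1 : τ * μ ≤ 1 / 4)
    (hh : 0 ≤ inner ℝ (zh - ((1 - p) • z + p • w - τ • G)) (zi - zh))
    (hi : 0 ≤ inner ℝ (zi - ((1 - p) • z + p • w - τ • (G + D))) (zs - zi)) :
    2 * τ * inner ℝ (G + D) (zh - zs) + (1 + τ * μ) * ‖zi - zs‖ ^ 2 + p * ‖zh - w‖ ^ 2
      ≤ (1 - p) * ‖z - zs‖ ^ 2 + p * ‖w - zs‖ ^ 2 + 2 * τ ^ 2 * ‖D‖ ^ 2
        + 2 * τ * μ * ‖zh - zs‖ ^ 2 := by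
  obtain ⟨u, rfl⟩ : ∃ u, zi = zh + u := ⟨zi - zh, by abel⟩
  obtain ⟨v, rfl⟩ : ∃ v, zs = zh - v := ⟨zh - zs, by abel⟩
  obtain ⟨a, rfl⟩ : ∃ a, z = zh + a := ⟨z - zh, by abel⟩
  obtain ⟨b, rfl⟩ : ∃ b, w = zh + b := ⟨w - zh, by abel⟩
  have e1 : zh - ((1 - p) • (zh + a) + p • (zh + b) - τ • G)
      = τ • G - (1 - p) • a - p • b := by module
  have e2 : zh + u - ((1 - p) • (zh + a) + p • (zh + b) - τ • (G + D))
      = u - (1 - p) • a - p • b + τ • G + τ • D := by module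
  have e3 : zh - v - (zh + u) = -(u + v) := by abel
  have e4 : zh + u - (zh - v) = u + v := by abel
  have e5 : zh + a - (zh - v) = a + v := by abel
  have e6 : zh + b - (zh - v) = b + v := by abel
  have e7 : zh - (zh + b) = -b := by abel
  rw [e1, add_sub_cancel_left] at hh
  rw [e2, e3] at hi
  rw [sub_sub_cancel, e4, e5, e6, e7, norm_neg]
  have q1 : 0 ≤ ‖u + (2 * τ) • D‖ ^ 2 := sq_nonneg _
  have q2 : 0 ≤ τ * μ * ‖u - v‖ ^ 2 := mul_nonneg h0 (sq_nonneg _)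
  have q3 : 0 ≤ (1 / 2 - 2 * (τ * μ)) * ‖u‖ ^ 2 := mul_nonneg (by linarith) (sq_nonneg _)
  have q4 : 0 ≤ (1 - p) * ‖a‖ ^ 2 := mul_nonneg (by linarith) (sq_nonneg _)
  simp only [← real_inner_self_eq_norm_sq, inner_add_left, inner_add_right, inner_sub_left,
    inner_sub_right, inner_neg_right, real_inner_smul_left, real_inner_smul_right]
    at hh hi q1 q2 q3 q4 ⊢
  rw [real_inner_comm D u] at q1
  rw [real_inner_comm u v] at q2 ⊢
  rw [real_inner_comm a v, real_inner_comm b v]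
  linarith

/-- Strong monotonicity of the saddle operator, evaluated against a saddle point. -/
theorem StrongConvexOn.saddle_inner_gradient_lower_bound {E₁ E₂ : Type*}
    [NormedAddCommGroup E₁] [InnerProductSpace ℝ E₁] [CompleteSpace E₁]
    [NormedAddCommGroup E₂] [InnerProductSpace ℝ E₂] [CompleteSpace E₂]
    {X : Set E₁} {Y : Set E₂} {m : ℝ} {F : E₁ → E₂ → ℝ}
    (hconv : ∀ y ∈ Y, StrongConvexOn X m (fun x => F x y))
    (hconc : ∀ x ∈ X, StrongConcaveOn Y m (F x)) {x xs : E₁} {y ys : E₂}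
    (hx : x ∈ X) (hy : y ∈ Y) (hxs : xs ∈ X) (hys : ys ∈ Y)
    (hsaddle : ∀ x ∈ X, ∀ y ∈ Y, F xs y ≤ F xs ys ∧ F xs ys ≤ F x ys)
    (hdx : DifferentiableAt ℝ (fun u => F u y) x) (hdy : DifferentiableAt ℝ (F x) y) :
    m * (‖x - xs‖ ^ 2 + ‖y - ys‖ ^ 2)
      ≤ inner ℝ (gradient (fun u => F u y) x) (x - xs)
        + inner ℝ (-gradient (F x) y) (y - ys) := by
  have hneg : gradient (-F x) y = -gradient (F x) y := by
    simp [gradient, fderiv_neg]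
  have a1 := (hconv y hy).add_inner_gradient_le hx hxs hdx
  have a2 := StrongConvexOn.add_inner_gradient_le (hconc x hx).neg hy hys hdy.neg
  have a3 := (hconv ys hys).add_sq_le_of_isMinOn hxs hx (fun u hu => (hsaddle u hu ys hys).2)
  have a4 := StrongConvexOn.add_sq_le_of_isMinOn (hconc xs hxs).neg hys hy
    (fun v hv => neg_le_neg (hsaddle xs hxs v hv).1)
  rw [hneg] at a2
  simp only [Pi.neg_apply] at a2 a4
  rw [← neg_sub x xs, inner_neg_right] at a1
  rw [← neg_sub y ys, inner_neg_right] at a2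
  rw [norm_sub_rev] at a3 a4
  linarith


/-- One-step contraction of L-SVRE, in expectation over the uniformly drawn
component index. Here `Z = X × Y`, `{f i}` is `L`-average smooth, `f` is `(μ, μ)`-convex-
concave with saddle point `z* = (x*, y*)`, `p = 1/(2n)`, `τ = 1/(4√n L)`,
`z̄ = (1−p)z + p w`, `z' = P_Z(z̄ − τ g(w))`, and for each `i`,
`z₊⁽ⁱ⁾ = P_Z(z̄ − τ(g(w) + gᵢ(z') − gᵢ(w)))`. Then
`(1 + τμ)(1/n)∑ᵢ ‖z₊⁽ⁱ⁾ − z*‖² ≤ (1−p)‖z − z*‖² + p‖w − z*‖²`. -/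
theorem lsvre_one_step_contraction
    {dx dy n : ℕ} (hn : 0 < n)
    (X : Set (EuclideanSpace ℝ (Fin dx))) (Y : Set (EuclideanSpace ℝ (Fin dy)))
    (hXne : X.Nonempty) (hXcl : IsClosed X) (hXcv : Convex ℝ X)
    (hYne : Y.Nonempty) (hYcl : IsClosed Y) (hYcv : Convex ℝ Y)
    (f : Fin n → EuclideanSpace ℝ (Fin dx) → EuclideanSpace ℝ (Fin dy) → ℝ)
    (hdiff : ∀ i, Differentiable ℝ
      (fun p : EuclideanSpace ℝ (Fin dx) × EuclideanSpace ℝ (Fin dy) => f i p.1 p.2))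
    (L μ : ℝ) (hμ : 0 < μ) (hμL : μ ≤ L)
    (havg : ∀ x x' : EuclideanSpace ℝ (Fin dx), ∀ y y' : EuclideanSpace ℝ (Fin dy),
      (n : ℝ)⁻¹ * ∑ i,
          (‖gradient (fun u => f i u y) x - gradient (fun u => f i u y') x'‖ ^ 2 +
            ‖gradient (fun v => f i x v) y - gradient (fun v => f i x' v) y'‖ ^ 2)
        ≤ L ^ 2 * (‖x - x'‖ ^ 2 + ‖y - y'‖ ^ 2))
    (F : EuclideanSpace ℝ (Fin dx) → EuclideanSpace ℝ (Fin dy) → ℝ)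
    (hF : F = fun x y => (n : ℝ)⁻¹ * ∑ i, f i x y)
    (hconv : ∀ y ∈ Y, StrongConvexOn X μ (fun x => F x y))
    (hconc : ∀ x ∈ X, StrongConcaveOn Y μ (F x))
    (zs : EuclideanSpace ℝ (Fin dx) × EuclideanSpace ℝ (Fin dy))
    (hzs : zs.1 ∈ X ∧ zs.2 ∈ Y)
    (hsaddle : ∀ x ∈ X, ∀ y ∈ Y, F zs.1 y ≤ F zs.1 zs.2 ∧ F zs.1 zs.2 ≤ F x zs.2)
    (PX : EuclideanSpace ℝ (Fin dx) → EuclideanSpace ℝ (Fin dx))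
    (hPX : ∀ u, PX u ∈ X ∧ ∀ v ∈ X, ‖u - PX u‖ ≤ ‖u - v‖)
    (PY : EuclideanSpace ℝ (Fin dy) → EuclideanSpace ℝ (Fin dy))
    (hPY : ∀ u, PY u ∈ Y ∧ ∀ v ∈ Y, ‖u - PY u‖ ≤ ‖u - v‖)
    -- gradient operators
    (g : Fin n → EuclideanSpace ℝ (Fin dx) × EuclideanSpace ℝ (Fin dy) →
      EuclideanSpace ℝ (Fin dx) × EuclideanSpace ℝ (Fin dy))
    (hg : g = fun i z =>
      (gradient (fun u => f i u z.2) z.1, -(gradient (fun v => f i z.1 v) z.2)))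
    (G : EuclideanSpace ℝ (Fin dx) × EuclideanSpace ℝ (Fin dy) →
      EuclideanSpace ℝ (Fin dx) × EuclideanSpace ℝ (Fin dy))
    (hG : G = fun z =>
      (gradient (fun u => F u z.2) z.1, -(gradient (fun v => F z.1 v) z.2)))
    (p τ : ℝ) (hp : p = 1 / (2 * n)) (hτ : τ = 1 / (4 * Real.sqrt n * L))
    (z w : EuclideanSpace ℝ (Fin dx) × EuclideanSpace ℝ (Fin dy))
    (hz : z.1 ∈ X ∧ z.2 ∈ Y) (hw : w.1 ∈ X ∧ w.2 ∈ Y)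
    (zb : EuclideanSpace ℝ (Fin dx) × EuclideanSpace ℝ (Fin dy))
    (hzb : zb = (1 - p) • z + p • w)
    (zhalf : EuclideanSpace ℝ (Fin dx) × EuclideanSpace ℝ (Fin dy))
    (hzhalf : zhalf = (PX (zb - τ • G w).1, PY (zb - τ • G w).2))
    (zplus : Fin n → EuclideanSpace ℝ (Fin dx) × EuclideanSpace ℝ (Fin dy))
    (hzplus : zplus = fun i =>
      (PX (zb - τ • (G w + g i zhalf - g i w)).1, PY (zb - τ • (G w + g i zhalf - g i w)).2)) :
    (1 + τ * μ) * ((n : ℝ)⁻¹ * ∑ i,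
        (‖(zplus i).1 - zs.1‖ ^ 2 + ‖(zplus i).2 - zs.2‖ ^ 2))
      ≤ (1 - p) * (‖z.1 - zs.1‖ ^ 2 + ‖z.2 - zs.2‖ ^ 2)
        + p * (‖w.1 - zs.1‖ ^ 2 + ‖w.2 - zs.2‖ ^ 2) := by
  have hn' : (0 : ℝ) < n := by exact_mod_cast hn
  have hn1 : (1 : ℝ) ≤ n := by exact_mod_cast hn
  have hL : 0 < L := hμ.trans_le hμL
  have hs1 : 1 ≤ Real.sqrt n := Real.one_le_sqrt.2 hn1
  have hs : 0 < Real.sqrt n := by linarith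
  have hτ0 : 0 < τ := by rw [hτ]; positivity
  have hτμ : τ * μ ≤ 1 / 4 := by
    rw [hτ, div_mul_eq_mul_div, div_le_div_iff₀ (by positivity) (by norm_num)]
    nlinarith
  have hτL : 2 * τ ^ 2 * L ^ 2 ≤ p := by
    have : 2 * τ ^ 2 * L ^ 2 = p / 4 := by
      rw [hτ, hp, div_pow, mul_pow, mul_pow, Real.sq_sqrt hn'.le]
      field_simp
      norm_num
    have hp0 : 0 ≤ p := by rw [hp]; positivity
    linarith
  have hp1 : p ≤ 1 := by
    rw [hp, div_le_one (by positivity)]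
    linarith
  have hdx : ∀ i x y, DifferentiableAt ℝ (fun u => f i u y) x := fun i x y =>
    DifferentiableAt.comp (f := fun u => (u, y)) x ((hdiff i) (x, y)) (by fun_prop)
  have hdy : ∀ i x y, DifferentiableAt ℝ (fun v => f i x v) y := fun i x y =>
    DifferentiableAt.comp (f := fun v => (x, v)) y ((hdiff i) (x, y)) (by fun_prop)
  have hGavg : ∀ q, G q = (n : ℝ)⁻¹ • ∑ i, g i q := by
    intro q
    have gx : gradient (fun u => F u q.2) q.1
        = (n : ℝ)⁻¹ • ∑ i, gradient (fun u => f i u q.2) q.1 := by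
      simp only [hF, gradient]
      rw [fderiv_const_mul (DifferentiableAt.fun_sum fun i _ => hdx i _ _),
        fderiv_fun_sum fun i _ => hdx i _ _]
      simp
    have gy : gradient (fun v => F q.1 v) q.2
        = (n : ℝ)⁻¹ • ∑ i, gradient (fun v => f i q.1 v) q.2 := by
      simp only [hF, gradient]
      rw [fderiv_const_mul (DifferentiableAt.fun_sum fun i _ => hdy i _ _),
        fderiv_fun_sum fun i _ => hdy i _ _]
      simp
    rw [hG, hg]
    ext1
    · simpa [Prod.fst_sum] using gx
    · simp only [Prod.smul_snd, Prod.snd_sum, Finset.sum_neg_distrib, smul_neg, neg_inj]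
      exact gy
  have hzhX : zhalf.1 ∈ X := by rw [hzhalf]; exact (hPX _).1
  have hzhY : zhalf.2 ∈ Y := by rw [hzhalf]; exact (hPY _).1
  have hmono : μ * (‖zhalf.1 - zs.1‖ ^ 2 + ‖zhalf.2 - zs.2‖ ^ 2)
      ≤ inner ℝ (G zhalf).1 (zhalf.1 - zs.1) + inner ℝ (G zhalf).2 (zhalf.2 - zs.2) := by
    have hFx : DifferentiableAt ℝ (fun u => F u zhalf.2) zhalf.1 := by
      rw [hF]
      exact (DifferentiableAt.fun_sum fun i _ => hdx i _ _).const_mul _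
    have hFy : DifferentiableAt ℝ (F zhalf.1) zhalf.2 := by
      rw [hF]
      exact (DifferentiableAt.fun_sum fun i _ => hdy i _ _).const_mul _
    have := StrongConvexOn.saddle_inner_gradient_lower_bound hconv hconc hzhX hzhY hzs.1 hzs.2
      hsaddle hFx hFy
    rw [hG]
    exact this
  have hstep : ∀ i,
      (1 + τ * μ) * (‖(zplus i).1 - zs.1‖ ^ 2 + ‖(zplus i).2 - zs.2‖ ^ 2)
        ≤ (1 - p) * (‖z.1 - zs.1‖ ^ 2 + ‖z.2 - zs.2‖ ^ 2)
          + p * (‖w.1 - zs.1‖ ^ 2 + ‖w.2 - zs.2‖ ^ 2)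
          + 2 * τ * μ * (‖zhalf.1 - zs.1‖ ^ 2 + ‖zhalf.2 - zs.2‖ ^ 2)
          - p * (‖zhalf.1 - w.1‖ ^ 2 + ‖zhalf.2 - w.2‖ ^ 2)
          + 2 * τ ^ 2 * (‖(g i zhalf - g i w).1‖ ^ 2 + ‖(g i zhalf - g i w).2‖ ^ 2)
          - 2 * τ * (inner ℝ (G w + (g i zhalf - g i w)).1 (zhalf.1 - zs.1)
            + inner ℝ (G w + (g i zhalf - g i w)).2 (zhalf.2 - zs.2)) := by
    intro i
    have hziX : (zplus i).1 ∈ X := by rw [hzplus]; exact (hPX _).1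
    have hziY : (zplus i).2 ∈ Y := by rw [hzplus]; exact (hPY _).1
    have sx := anchored_extragradient_step (z := z.1) (w := w.1) (zs := zs.1) (zh := zhalf.1)
      (zi := (zplus i).1) (G := (G w).1) (D := (g i zhalf - g i w).1) hp1
      (mul_pos hτ0 hμ).le hτμ
      (by
        have := inner_sub_nonneg_of_forall_norm_sub_le hXcv (hPX (zb - τ • G w).1).1
          (hPX (zb - τ • G w).1).2 hziX
        rw [show PX (zb - τ • G w).1 = zhalf.1 by rw [hzhalf], hzb] at this
        exact this)
      (by
        have := inner_sub_nonneg_of_forall_norm_sub_le hXcv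
          (hPX (zb - τ • (G w + g i zhalf - g i w)).1).1
          (hPX (zb - τ • (G w + g i zhalf - g i w)).1).2 hzs.1
        rw [show PX (zb - τ • (G w + g i zhalf - g i w)).1 = (zplus i).1 by rw [hzplus], hzb,
          add_sub_assoc (G w)] at this
        exact this)
    have sy := anchored_extragradient_step (z := z.2) (w := w.2) (zs := zs.2) (zh := zhalf.2)
      (zi := (zplus i).2) (G := (G w).2) (D := (g i zhalf - g i w).2) hp1
      (mul_pos hτ0 hμ).le hτμ
      (by
        have := inner_sub_nonneg_of_forall_norm_sub_le hYcv (hPY (zb - τ • G w).2).1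
          (hPY (zb - τ • G w).2).2 hziY
        rw [show PY (zb - τ • G w).2 = zhalf.2 by rw [hzhalf], hzb] at this
        exact this)
      (by
        have := inner_sub_nonneg_of_forall_norm_sub_le hYcv
          (hPY (zb - τ • (G w + g i zhalf - g i w)).2).1
          (hPY (zb - τ • (G w + g i zhalf - g i w)).2).2 hzs.2
        rw [show PY (zb - τ • (G w + g i zhalf - g i w)).2 = (zplus i).2 by rw [hzplus], hzb,
          add_sub_assoc (G w)] at this
        exact this)
    simp only [Prod.fst_add, Prod.snd_add]
    linarith
  have havg' : (n : ℝ)⁻¹ * ∑ i,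
      (‖(g i zhalf - g i w).1‖ ^ 2 + ‖(g i zhalf - g i w).2‖ ^ 2)
        ≤ L ^ 2 * (‖zhalf.1 - w.1‖ ^ 2 + ‖zhalf.2 - w.2‖ ^ 2) := by
    have := havg zhalf.1 w.1 zhalf.2 w.2
    simp only [hg, Prod.fst_sub, Prod.snd_sub]
    convert this using 5 with i
    rw [neg_sub_neg, norm_sub_rev]
  have hmean : (n : ℝ)⁻¹ • ∑ i, (G w + (g i zhalf - g i w)) = G zhalf := by
    rw [Finset.sum_add_distrib, Finset.sum_sub_distrib, smul_add, smul_sub, ← hGavg, ← hGavg]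
    simp [← Nat.cast_smul_eq_nsmul ℝ, smul_smul, hn'.ne']
  have hinner : (n : ℝ)⁻¹ * ∑ i, (inner ℝ (G w + (g i zhalf - g i w)).1 (zhalf.1 - zs.1)
      + inner ℝ (G w + (g i zhalf - g i w)).2 (zhalf.2 - zs.2))
      = inner ℝ (G zhalf).1 (zhalf.1 - zs.1) + inner ℝ (G zhalf).2 (zhalf.2 - zs.2) := by
    rw [← hmean, Prod.smul_fst, Prod.smul_snd, Prod.fst_sum, Prod.snd_sum, real_inner_smul_left,
      real_inner_smul_left, sum_inner, sum_inner, Finset.sum_add_distrib, mul_add]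
  have hsum := mul_le_mul_of_nonneg_left
    (Finset.sum_le_sum fun i (_ : i ∈ Finset.univ) => hstep i) (inv_nonneg.2 hn'.le)
  rw [Finset.sum_sub_distrib, Finset.sum_add_distrib, ← Finset.mul_sum, ← Finset.mul_sum,
    ← Finset.mul_sum, Finset.sum_const, Finset.card_univ, Fintype.card_fin, nsmul_eq_mul,
    mul_sub, mul_add, inv_mul_cancel_left₀ hn'.ne', mul_left_comm, mul_left_comm _ (2 * τ ^ 2),
    mul_left_comm _ (2 * τ), hinner] at hsum
  have k1 := mul_le_mul_of_nonneg_left havg' (show 0 ≤ 2 * τ ^ 2 by positivity)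
  have k2 := mul_le_mul_of_nonneg_right hτL
    (show 0 ≤ ‖zhalf.1 - w.1‖ ^ 2 + ‖zhalf.2 - w.2‖ ^ 2 by positivity)
  have k3 := mul_le_mul_of_nonneg_left hmono (show 0 ≤ 2 * τ by positivity)
  linarith
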